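/- Let k be an algebraically closed field of characteristic 0 and let A be a finitely generated commutative k-algebra which is an integral domain and a smooth k-algebra (the coordinate ring of a smooth irreducible affine variety X), and assume Der_k(A) ≠ 0 (equivalently, X has positive dimension). Then Der_k(A), the Lie algebra of polynomial vector fields on X, is a simple Lie algebra over k: it is non-abelian and its only Lie ideals are 0 and Der_k(A). -/

import Mathlib

/-! Let `L` be a Lie–Rinehart algebra acting faithfully on a reduced ring `A` which contains `1/2`
and has no proper nonzero `L`-stable ideal. If `J` is a nonzero Lie ideal and `0 ≠ x ∈ J`, then `J`
contains every `A`-multiple of `x(x(a)) • x`, so the largest `A`-submodule `P ⊆ J` is nonzero. The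
annihilator of `L / P` is an `L`-stable ideal, and it is nonzero because
`y(b) • z = [y, b • z] - b • [y, z]` lies in `P` for `y ∈ P`. Hence `P = L`, and so `J = L`.

For `A` formally smooth over a field of characteristic zero, let `I` be a stable ideal inside a
maximal ideal `m`. Formal smoothness of `A` and of `A / m` yields a derivation `E = ∑ aᵢ dᵢ` with
`aᵢ ∈ m` which is the identity on `m / m²`, hence multiplication by `n` on `mⁿ / mⁿ⁺¹`. If `I ⊆ mⁿ`
and `f ∈ I`, then `n f ≡ E f = ∑ aᵢ dᵢ(f) ≡ 0` modulo `mⁿ⁺¹`, so `I ⊆ mⁿ⁺¹`. By Krull's intersection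
theorem `I = 0`. -/

section InvariantIdeals

variable (L : Type*) {A : Type*} [CommRing A] [Bracket L A]

/-- An ideal `I` of `A` is invariant under `L` if the action of `L` on `A` maps `I` into itself.
For `L = Derivation k A A` these are the differential ideals. -/
def IsInvariantIdeal (I : Ideal A) : Prop :=
  ∀ x : L, ∀ f ∈ I, ⁅x, f⁆ ∈ I

variable (A) in
/-- `A` is differentially simple under `L` if its only `L`-invariant ideals are `⊥` and `⊤`.
The zero ring is allowed. -/
def IsDifferentiallySimple : Prop :=
  ∀ I : Ideal A, IsInvariantIdeal L I → I = ⊥ ∨ I = ⊤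

end InvariantIdeals

section LieRinehart

variable {R A L : Type*} [CommRing R] [CommRing A] [LieRing L] [Module A L] [LieAlgebra R L]

/-- The largest `A`-submodule contained in a Lie ideal `J` of `L`. -/
def linearCore (A : Type*) [CommRing A] [Module A L] (J : LieIdeal R L) : Submodule A L where
  carrier := {x | ∀ a : A, a • x ∈ J}
  add_mem' {x y} hx hy a := (smul_add a x y).symm ▸ add_mem (hx a) (hy a)
  zero_mem' a := (smul_zero a : a • (0 : L) = 0).symm ▸ zero_mem J
  smul_mem' b x hx a := (smul_smul a b x).symm ▸ hx (a * b)

theorem mem_of_mem_linearCore {J : LieIdeal R L} {x : L} (hx : x ∈ linearCore A J) : x ∈ J :=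
  one_smul A x ▸ hx 1

variable [LieRingModule L A] [LieRinehartRing A L]

open LieRinehartRing

theorem lie_mem_linearCore {J : LieIdeal R L} (x : L) {y : L} (hy : y ∈ linearCore A J) :
    ⁅x, y⁆ ∈ linearCore A J := by
  intro a
  rw [← add_sub_cancel_right (a • ⁅x, y⁆) (⁅x, a⁆ • y), ← leibniz_smul_right]
  exact sub_mem (lie_mem_right R L J x _ (hy a)) (hy ⁅x, a⁆)

section InvariantSubmodules

variable {P : Submodule A L} (hP : ∀ x : L, ∀ y ∈ P, ⁅x, y⁆ ∈ P)
include hP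

theorem isInvariantIdeal_colon_univ : IsInvariantIdeal L (P.colon Set.univ) := by
  intro x f hf
  refine Submodule.mem_colon.2 fun y _ => ?_
  rw [← add_sub_cancel_left (f • ⁅x, y⁆) (⁅x, f⁆ • y), ← leibniz_smul_right]
  exact sub_mem (hP x _ (Submodule.mem_colon.1 hf y trivial)) (Submodule.mem_colon.1 hf _ trivial)

theorem lie_mem_colon_univ {y : L} (hy : y ∈ P) (b : A) : ⁅y, b⁆ ∈ P.colon Set.univ := by
  have lie_mem_of_left (z : L) : ⁅y, z⁆ ∈ P := by
    simpa only [lie_skew] using neg_mem (hP z y hy)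
  refine Submodule.mem_colon.2 fun z _ => ?_
  rw [← add_sub_cancel_left (b • ⁅y, z⁆) (⁅y, b⁆ • z), ← leibniz_smul_right]
  exact sub_mem (lie_mem_of_left _) (P.smul_mem b (lie_mem_of_left z))

end InvariantSubmodules

theorem lie_smul_self_eq (x : L) (a : A) : ⁅x, a • x⁆ = ⁅x, a⁆ • x := by
  rw [leibniz_smul_right, lie_self, smul_zero, zero_add]

theorem lie_lie_smul_mem_linearCore (h2 : IsUnit (2 : R)) {J : LieIdeal R L} {x : L}
    (hx : x ∈ J) (a : A) : ⁅x, ⁅x, a⁆⁆ • x ∈ linearCore A J := by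
  intro b
  have lie_smul_mem : ⁅x, a⁆ • x ∈ J := lie_smul_self_eq x a ▸ lie_mem_left R L J x _ hx
  have two_smul_eq :
      (2 : R) • b • ⁅x, ⁅x, a⁆⁆ • x = ⁅x, (⁅x, a⁆ * b) • x⁆ - ⁅⁅x, a⁆ • x, b • x⁆ := by
    rw [lie_smul_self_eq, leibniz_mul_right, leibniz_smul_right, lie_smul_eq_mul,
      ← lie_skew, lie_smul_self_eq, two_smul]
    module
  rw [← LieSubmodule.mem_toSubmodule, ← Submodule.smul_mem_iff_of_isUnit _ h2, two_smul_eq]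
  exact sub_mem (lie_mem_left R L J _ _ hx) (lie_mem_left R L J _ _ lie_smul_mem)

theorem lie_smul_self_ne_zero [IsReduced A] {x : L} {a : A} (ha : ⁅x, a⁆ ≠ 0) :
    ⁅x, a⁆ • x ≠ 0 := by
  intro h
  have sq_eq_zero : ⁅x, a⁆ ^ 2 = 0 := by rw [sq, ← lie_smul_eq_mul, h, zero_lie]
  exact ha ((pow_eq_zero_iff two_ne_zero).1 sq_eq_zero)

section Faithful

variable (faithful : ∀ x : L, (∀ a : A, ⁅x, a⁆ = 0) → x = 0)
include faithful

theorem exists_lie_lie_ne_zero [IsReduced A] (h2 : IsUnit (2 : A)) {x : L} (hx : x ≠ 0) :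
    ∃ a : A, ⁅x, ⁅x, a⁆⁆ ≠ 0 := by
  contrapose! hx
  refine faithful x fun a => ?_
  have two_mul_sq : 2 * ⁅x, a⁆ ^ 2 = 0 := by
    have lie_lie_mul_self := hx (a * a)
    simp only [leibniz_mul_right, lie_add, hx a, smul_eq_mul, mul_zero, zero_mul, zero_add,
      add_zero] at lie_lie_mul_self
    rw [two_mul, sq, lie_lie_mul_self]
  exact (pow_eq_zero_iff two_ne_zero).1 (h2.mul_right_eq_zero.1 two_mul_sq)

theorem linearCore_ne_bot [Algebra R A] [IsReduced A] (h2 : IsUnit (2 : R)) {J : LieIdeal R L}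
    (hJ : J ≠ ⊥) : linearCore A J ≠ ⊥ := by
  obtain ⟨x, hxJ, hx⟩ : ∃ x ∈ J, x ≠ 0 := by
    contrapose! hJ
    exact (LieSubmodule.eq_bot_iff J).2 hJ
  obtain ⟨a, ha⟩ := exists_lie_lie_ne_zero faithful
    (map_ofNat (algebraMap R A) 2 ▸ h2.map (algebraMap R A)) hx
  exact (Submodule.ne_bot_iff _).2
    ⟨_, lie_lie_smul_mem_linearCore h2 hxJ a, lie_smul_self_ne_zero ha⟩

theorem IsDifferentiallySimple.eq_top_of_lie_mem (hA : IsDifferentiallySimple L A)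
    {P : Submodule A L} (hP : ∀ x : L, ∀ y ∈ P, ⁅x, y⁆ ∈ P) (hP0 : P ≠ ⊥) : P = ⊤ := by
  obtain ⟨y, hyP, hy⟩ := (Submodule.ne_bot_iff P).1 hP0
  have colon_ne_bot : P.colon Set.univ ≠ ⊥ := by
    contrapose! hy
    exact faithful y fun b => (Submodule.mem_bot A).1 (hy ▸ lie_mem_colon_univ hP hyP b)
  have colon_eq_top := (hA _ (isInvariantIdeal_colon_univ hP)).resolve_left colon_ne_bot
  exact top_unique fun x _ => (Submodule.colon_eq_top_iff_subset _).1 colon_eq_top trivial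

theorem not_isLieAbelian_of_faithful [IsReduced A] [Nontrivial L] : ¬ IsLieAbelian L := by
  intro hL
  obtain ⟨x, hx⟩ := exists_ne (0 : L)
  refine hx (faithful x fun a => ?_)
  by_contra ha
  exact lie_smul_self_ne_zero ha (lie_smul_self_eq x a ▸ hL.trivial x (a • x))

theorem IsDifferentiallySimple.isSimple [Algebra R A] [IsReduced A] [Nontrivial L]
    (hA : IsDifferentiallySimple L A) (h2 : IsUnit (2 : R)) : LieAlgebra.IsSimple R L where
  eq_bot_or_eq_top J := or_iff_not_imp_left.2 fun hJ => by
    have core_eq_top : linearCore A J = ⊤ :=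
      hA.eq_top_of_lie_mem faithful (fun x _ => lie_mem_linearCore x)
        (linearCore_ne_bot faithful h2 hJ)
    exact top_unique fun x _ => mem_of_mem_linearCore (A := A) (core_eq_top ▸ Submodule.mem_top)
  non_abelian := not_isLieAbelian_of_faithful faithful

end Faithful

end LieRinehart

section EulerDerivation

open KaehlerDifferential

theorem linearMap_mem_smul_top_of_forall_mem {A M : Type*} [CommRing A] [AddCommGroup M]
    [Module A M] [Module.Projective A M] {I : Ideal A} (hI : I.FG) {θ : M →ₗ[A] A}
    (hθ : ∀ v, θ v ∈ I) : θ ∈ (I • ⊤ : Submodule A (M →ₗ[A] A)) := by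
  obtain ⟨n, x, rfl⟩ := Submodule.fg_iff_exists_fin_generating_family.1 hI
  let combination := (Fintype.linearCombination A x).rangeRestrict
  have range_eq := Fintype.range_linearCombination A x
  obtain ⟨ψ, hψ⟩ := Module.projective_lifting_property combination
    (θ.codRestrict _ fun v => range_eq.symm ▸ hθ v) (LinearMap.surjective_rangeRestrict _)
  have θ_eq : θ = ∑ i, x i • (LinearMap.proj i ∘ₗ ψ) := by
    ext v
    have combination_ψ : (combination (ψ v) : A) = θ v :=
      congrArg Subtype.val (LinearMap.congr_fun hψ v)
    simpa [combination, Fintype.linearCombination_apply, mul_comm] using combination_ψ.symm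
  rw [θ_eq]
  exact sum_mem fun i _ =>
    Submodule.smul_mem_smul (Ideal.subset_span (Set.mem_range_self i)) trivial

variable {k A : Type*} [CommRing k] [CommRing A] [Algebra k A]

theorem derivation_mem_smul_top_of_forall_mem [Module.Projective A Ω[A⁄k]] {I : Ideal A}
    (hI : I.FG) {E : Derivation k A A} (hE : ∀ a, E a ∈ I) :
    E ∈ (I • ⊤ : Submodule A (Derivation k A A)) := by
  have range_lift_le : LinearMap.range E.liftKaehlerDifferential ≤ I := by
    rw [LinearMap.range_eq_map, ← span_range_derivation, Submodule.map_span_le]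
    rintro _ ⟨a, rfl⟩
    rw [E.liftKaehlerDifferential_comp_D]
    exact hE a
  have lift_mem := linearMap_mem_smul_top_of_forall_mem hI fun v => range_lift_le ⟨v, rfl⟩
  have E_mem := Submodule.mem_map_of_mem (f := (linearMapEquivDerivation k A).toLinearMap) lift_mem
  rw [Submodule.map_smul''] at E_mem
  have lift_eq : linearMapEquivDerivation k A E.liftKaehlerDifferential = E :=
    (linearMapEquivDerivation k A).apply_symm_apply E
  exact lift_eq ▸ Submodule.smul_mono le_rfl le_top E_mem

theorem derivation_apply_mem_mul {I J : Ideal A} {E : Derivation k A A}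
    (hE : E ∈ (I • ⊤ : Submodule A (Derivation k A A))) {f : A}
    (hf : ∀ d : Derivation k A A, d f ∈ J) : E f ∈ I * J := by
  refine Submodule.smul_induction_on hE (fun a ha d _ => ?_) fun d e hd he => ?_
  · exact Ideal.mul_mem_mul ha (hf d)
  · exact add_mem hd he

/-- An Euler derivation at an ideal `I`: a combination of derivations with coefficients in `I` that
induces the identity on the conormal module `I / I²`. -/
structure IsEulerDerivation (I : Ideal A) (E : Derivation k A A) : Prop where
  mem_smul_top : E ∈ (I • ⊤ : Submodule A (Derivation k A A))
  apply_sub_mem_sq : ∀ x ∈ I, E x - x ∈ I ^ 2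

theorem IsEulerDerivation.apply_sub_natCast_mul_mem {I : Ideal A} {E : Derivation k A A}
    (hE : IsEulerDerivation I E) (n : ℕ) :
    ∀ f ∈ I ^ n, E f - n * f ∈ I ^ (n + 1) := by
  induction n with
  | zero =>
    intro f _
    simpa using derivation_apply_mem_mul (J := ⊤) hE.mem_smul_top (f := f) fun _ => trivial
  | succ n ih =>
    intro f hf
    rw [pow_succ] at hf
    refine Submodule.mul_induction_on hf (fun a ha b hb => ?_) fun f g hf hg => ?_
    · have leibniz_eq : E (a * b) - ((n + 1 : ℕ) : A) * (a * b) =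
          a * (E b - b) + (E a - n * a) * b := by
        rw [E.leibniz, smul_eq_mul, smul_eq_mul, Nat.cast_succ]
        ring
      rw [leibniz_eq]
      refine add_mem ?_ (pow_succ I (n + 1) ▸ Ideal.mul_mem_mul (ih a ha) hb)
      exact pow_add I n 2 ▸ Ideal.mul_mem_mul ha (hE.apply_sub_mem_sq b hb)
    · rw [map_add, mul_add, add_sub_add_comm]
      exact add_mem hf hg

theorem exists_isEulerDerivation {B : Type*} [CommRing B] [Algebra k B] [Algebra A B]
    [IsScalarTower k A B] [Algebra.FormallySmooth k A] [Algebra.FormallySmooth k B]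
    (hAB : Function.Surjective (algebraMap A B)) (hI : (RingHom.ker (algebraMap A B)).FG) :
    ∃ E : Derivation k A A, IsEulerDerivation (RingHom.ker (algebraMap A B)) E := by
  set I := RingHom.ker (algebraMap A B)
  obtain ⟨retraction, hr⟩ := (Algebra.FormallySmooth.iff_split_injection (R := k) hAB).1 ‹_›
  let φ : Ω[A⁄k] →ₗ[A] I.Cotangent := retraction ∘ₗ TensorProduct.mk A B Ω[A⁄k] 1
  obtain ⟨ψ, hψ⟩ := Module.projective_lifting_property I.toCotangent φ I.toCotangent_surjective
  let E := (I.subtype ∘ₗ ψ).compDer (D k A)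
  refine ⟨E, derivation_mem_smul_top_of_forall_mem hI fun a => (ψ (D k A a)).2, fun x hx => ?_⟩
  have toCotangent_eq : I.toCotangent (ψ (D k A x)) = I.toCotangent ⟨x, hx⟩ :=
    calc I.toCotangent (ψ (D k A x)) = φ (D k A x) := LinearMap.congr_fun hψ (D k A x)
      _ = I.toCotangent ⟨x, hx⟩ := LinearMap.congr_fun hr (I.toCotangent ⟨x, hx⟩)
  exact I.toCotangent_eq.1 toCotangent_eq

end EulerDerivation

section CharZero

theorem formallySmooth_of_charZero (K L : Type*) [Field K] [CharZero K] [Field L] [Algebra K L] :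
    Algebra.FormallySmooth K L := by
  obtain ⟨s, hs⟩ := exists_isTranscendenceBasis K L
  have := hs.isAlgebraic_field
  exact .of_algebraicIndependent_of_isSeparable hs.1

variable {k A : Type*} [Field k] [CharZero k] [CommRing A] [Algebra k A]

theorem IsInvariantIdeal.le_pow_succ {I m : Ideal A} (hI : IsInvariantIdeal (Derivation k A A) I)
    (hIm : I ≤ m) {E : Derivation k A A} (hE : IsEulerDerivation m E) (n : ℕ) :
    I ≤ m ^ (n + 1) := by
  induction n with
  | zero => rwa [zero_add, pow_one]
  | succ n ih =>
    intro f hf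
    have E_mem : E f ∈ m ^ (n + 2) :=
      pow_succ' m (n + 1) ▸ derivation_apply_mem_mul hE.mem_smul_top fun d => ih (hI d f hf)
    have smul_mem : ((n + 1 : ℕ) : k) • f ∈ m ^ (n + 2) := by
      rw [Nat.cast_smul_eq_nsmul, nsmul_eq_mul]
      exact (Submodule.sub_mem_iff_right _ E_mem).1 (hE.apply_sub_natCast_mul_mem (n + 1) f (ih hf))
    exact (((m ^ (n + 2)).restrictScalars k).smul_mem_iff (Nat.cast_ne_zero.2 n.succ_ne_zero)).1
      smul_mem

variable (k A)

theorem isDifferentiallySimple_of_formallySmooth [IsDomain A] [IsNoetherianRing A]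
    [Algebra.FormallySmooth k A] : IsDifferentiallySimple (Derivation k A A) A := by
  refine fun I hI => or_iff_not_imp_right.2 fun hI_ne_top => ?_
  obtain ⟨m, hm, hIm⟩ := Ideal.exists_le_maximal I hI_ne_top
  let := Ideal.Quotient.field m
  have := formallySmooth_of_charZero k (A ⧸ m)
  obtain ⟨E, hE⟩ := exists_isEulerDerivation (k := k) (B := A ⧸ m)
    Ideal.Quotient.mk_surjective (IsNoetherian.noetherian _)
  rw [Ideal.Quotient.algebraMap_eq, Ideal.mk_ker] at hE
  rw [eq_bot_iff, ← Ideal.iInf_pow_eq_bot_of_isDomain m hm.ne_top]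
  exact le_iInf fun n => (hI.le_pow_succ hIm hE n).trans (Ideal.pow_le_pow_right n.le_succ)

end CharZero

theorem derivations_isSimple_of_smooth_general {k A : Type*} [Field k] [CharZero k] [CommRing A]
    [IsDomain A] [IsNoetherianRing A] [Algebra k A] [Algebra.FormallySmooth k A]
    (hD : ∃ η : Derivation k A A, η ≠ 0) :
    LieAlgebra.IsSimple k (Derivation k A A) := by
  have : Nontrivial (Derivation k A A) := (nontrivial_iff_exists_ne 0).2 hD
  exact (isDifferentiallySimple_of_formallySmooth k A).isSimple (fun _ h => Derivation.ext h)
    (.mk0 2 two_ne_zero)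

/-- The Lie algebra of polynomial vector fields on a smooth irreducible affine variety of
positive dimension is simple. -/
theorem derivations_isSimple_of_smooth.{u}
    (k : Type u) [Field k] [IsAlgClosed k] [CharZero k]
    (A : Type u) [CommRing A] [IsDomain A] [Algebra k A] [Algebra.FiniteType k A]
    [Algebra.Smooth k A]
    (hD : ∃ η : Derivation k A A, η ≠ 0) :
    LieAlgebra.IsSimple k (Derivation k A A) := by
  have := Algebra.FiniteType.isNoetherianRing k A
  exact derivations_isSimple_of_smooth_general hD
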